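/- The operators 𝒫₁ and 𝒫₂ form a Hamiltonian pair: for all μ, ν ∈ ℝ and all a, b : ZMod N → ℝ, the matrix W(a,b) of the operator μ𝒫₁(a,b) + ν𝒫₂(a,b), with entries W_{αβ} indexed by α, β in the disjoint union of two copies of ZMod N (one copy for the a-slots of the pair, one for the b-slots), is antisymmetric (W_{αβ} = −W_{βα}) and satisfies the coordinate Jacobi identity: for all triples of indices α, β, γ, Σ_δ ( W_{δα} · ∂W_{βγ}/∂x_δ + W_{δβ} · ∂W_{γα}/∂x_δ + W_{δγ} · ∂W_{αβ}/∂x_δ ) = 0 at every point (a,b), where x_δ runs over the coordinates a_r and b_r (r ∈ ZMod N). -/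

import Mathlib

/-- The operator `𝒫₁(a,b)` (it only involves `a`):
`𝒫₁(θ,η) = (η_1 − η_{−2}, θ_2 − θ_{−1} + λ(a_1η_1 − aη_{−1}))`. -/
noncomputable def P1 {N : ℕ} (lam : ℝ) (a : ZMod N → ℝ)
    (θ η : ZMod N → ℝ) : (ZMod N → ℝ) × (ZMod N → ℝ) :=
  (fun s => η (s + 1) - η (s - 2),
   fun s => θ (s + 2) - θ (s - 1)
     + lam * (a (s + 1) * η (s + 1) - a s * η (s - 1)))

/-- The operator `𝒫₂(a,b)`, where `R` is the inverse of `𝒯 + 1 + 𝒯⁻¹`: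
`𝒫₂(θ,η) = ( b_{−1}θ_{−1} − bθ_1 + λa((𝒯−𝒯⁻¹)R(aθ)) + λa((1−𝒯⁻¹)R(bη)),
−λb((1−𝒯)R(aθ)) + λb((𝒯−𝒯⁻¹)R(bη)) )`. -/
noncomputable def P2 {N : ℕ} (lam : ℝ) (R : (ZMod N → ℝ) → (ZMod N → ℝ))
    (a b : ZMod N → ℝ) (θ η : ZMod N → ℝ) : (ZMod N → ℝ) × (ZMod N → ℝ) :=
  (fun s => b (s - 1) * θ (s - 1) - b s * θ (s + 1)
     + lam * a s * (R (fun r => a r * θ r) (s + 1) - R (fun r => a r * θ r) (s - 1))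
     + lam * a s * (R (fun r => b r * η r) s - R (fun r => b r * η r) (s - 1)),
   fun s => -(lam * b s * (R (fun r => a r * θ r) s - R (fun r => a r * θ r) (s + 1)))
     + lam * b s * (R (fun r => b r * η r) (s + 1) - R (fun r => b r * η r) (s - 1)))

/-- The coordinate basis vector of the phase space indexed by the disjoint union
`ZMod N ⊕ ZMod N` (first copy for the `a`/`θ`-slots, second for the `b`/`η`-slots). -/
noncomputable def basisPair {N : ℕ} (β : ZMod N ⊕ ZMod N) :
    (ZMod N → ℝ) × (ZMod N → ℝ) :=
  match β with
  | Sum.inl r => (Pi.single r 1, 0)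
  | Sum.inr r => (0, Pi.single r 1)

/-- The matrix `W(a,b)` of the operator `μ𝒫₁ + ν𝒫₂`, with entries indexed by the
disjoint union `ZMod N ⊕ ZMod N`. -/
noncomputable def Wmat {N : ℕ} (lam μ ν : ℝ)
    (R : (ZMod N → ℝ) → (ZMod N → ℝ)) (a b : ZMod N → ℝ)
    (α β : ZMod N ⊕ ZMod N) : ℝ :=
  let p := basisPair β
  match α with
  | Sum.inl s => μ * (P1 lam a p.1 p.2).1 s + ν * (P2 lam R a b p.1 p.2).1 s
  | Sum.inr s => μ * (P1 lam a p.1 p.2).2 s + ν * (P2 lam R a b p.1 p.2).2 s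

namespace HP

/-- Kronecker delta at zero. -/
noncomputable def dl {N : ℕ} (x : ZMod N) : ℝ := if x = 0 then 1 else 0

lemma dl_even {N : ℕ} (x : ZMod N) : dl (-x) = dl x := by
  simp [dl]

lemma dl_mul {N : ℕ} (x : ZMod N) (F G : ℝ) (h : x = 0 → F = G) :
    dl x * F = dl x * G := by
  unfold dl
  by_cases hx : x = 0
  · rw [h hx]
  · simp [hx]

/-- The bracket in explicit form. -/
noncomputable def Br {N : ℕ} (lam μ ν : ℝ) (ρ : ZMod N → ℝ) (a b : ZMod N → ℝ) :
    ZMod N ⊕ ZMod N → ZMod N ⊕ ZMod N → ℝ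
  | Sum.inl s, Sum.inl r => ν * (b r * dl (s - r - 1) - b s * dl (r - s - 1)
      + lam * a s * a r * (ρ (s - r + 1) - ρ (s - r - 1)))
  | Sum.inl s, Sum.inr r => μ * (dl (r - s - 1) - dl (s - r - 2))
      + ν * lam * a s * b r * (ρ (s - r) - ρ (s - r - 1))
  | Sum.inr r, Sum.inl s => -(μ * (dl (r - s - 1) - dl (s - r - 2))
      + ν * lam * a s * b r * (ρ (s - r) - ρ (s - r - 1)))
  | Sum.inr s, Sum.inr r => μ * lam * (a r * dl (r - s - 1) - a s * dl (s - r - 1))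
      + ν * lam * b s * b r * (ρ (s - r + 1) - ρ (s - r - 1))

/-- The derivative of the bracket in the direction `(p, q)`. -/
noncomputable def DBr {N : ℕ} (lam μ ν : ℝ) (ρ : ZMod N → ℝ) (a b p q : ZMod N → ℝ) :
    ZMod N ⊕ ZMod N → ZMod N ⊕ ZMod N → ℝ
  | Sum.inl s, Sum.inl r => ν * (q r * dl (s - r - 1) - q s * dl (r - s - 1)
      + lam * (p s * a r + a s * p r) * (ρ (s - r + 1) - ρ (s - r - 1)))
  | Sum.inl s, Sum.inr r =>
      ν * lam * (p s * b r + a s * q r) * (ρ (s - r) - ρ (s - r - 1))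
  | Sum.inr r, Sum.inl s =>
      -(ν * lam * (p s * b r + a s * q r) * (ρ (s - r) - ρ (s - r - 1)))
  | Sum.inr s, Sum.inr r => μ * lam * (p r * dl (r - s - 1) - p s * dl (s - r - 1))
      + ν * lam * (q s * b r + b s * q r) * (ρ (s - r + 1) - ρ (s - r - 1))

section
variable {N : ℕ} (ρ : ZMod N → ℝ)

/-- Oddness of the kernel. -/
lemma K_odd (hev : ∀ d, ρ (-d) = ρ d) (i j : ZMod N) :
    ρ (j - i + 1) - ρ (j - i - 1) = -(ρ (i - j + 1) - ρ (i - j - 1)) := by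
  rw [← hev (i - j + 1), ← hev (i - j - 1)]
  rw [show -(i - j + 1) = j - i - 1 by ring, show -(i - j - 1) = j - i + 1 by ring]
  ring

lemma ee_ef (i j k : ZMod N) :
    dl (i - j - 1) * dl (j - k - 1) = dl (j - k - 1) * dl (i - k - 2) := by
  rw [mul_comm]
  refine dl_mul _ _ _ fun h => ?_
  congr 1
  linear_combination -h

lemma ff_ee (i j k : ZMod N) :
    dl (i - j - 1) * dl (i - k - 2) = dl (i - j - 1) * dl (j - k - 1) := by
  refine dl_mul _ _ _ fun h => ?_
  congr 1
  linear_combination h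


lemma rec3 (hrec : ∀ d, ρ (d + 1) + ρ d + ρ (d - 1) = dl d)
    (d : ZMod N) : ρ (d + 2) - ρ (d - 1) = dl (d + 1) - dl d := by
  have h1 := hrec (d + 1)
  have h2 := hrec d
  rw [show d + 1 + 1 = d + 2 by ring, show d + 1 - 1 = d by ring] at h1
  linarith


/-- `aaa`: single-delta relation. -/
lemma aaa1 (hrec : ∀ d, ρ (d + 1) + ρ d + ρ (d - 1) = dl d)
    (i j k : ZMod N) :
    dl (i - j - 1) * (-(ρ (k - j) - ρ (k - j - 1)) + (ρ (k - j + 1) - ρ (k - j - 1))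
      + (ρ (k - i + 1) - ρ (k - i - 1))) = dl (i - j - 1) * (dl (k - j) - dl (k - i)) := by
  refine dl_mul _ _ _ fun h => ?_
  obtain rfl : i = j + 1 := by linear_combination h
  have h := rec3 ρ hrec (k - j - 1)
  ring_nf at h ⊢
  linarith

lemma aab1 (hev : ∀ d, ρ (-d) = ρ d)
    (hrec : ∀ d, ρ (d + 1) + ρ d + ρ (d - 1) = dl d)
    (i j k : ZMod N) :
    dl (k - i - 1) * ((ρ (i - j + 1) - ρ (i - j - 1)) - (ρ (j - k) - ρ (j - k - 1)))
      = dl (k - i - 1) * (dl (j - k) - dl (j - i)) := by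
  refine dl_mul _ _ _ fun h => ?_
  obtain rfl : k = i + 1 := by linear_combination h
  have h := rec3 ρ hrec (i - j)
  rw [← hev (j - _), ← hev (j - _ - 1), ← dl_even (j - _), ← dl_even (j - i)]
  ring_nf at h ⊢
  linarith

lemma aab2 (hev : ∀ d, ρ (-d) = ρ d)
    (hrec : ∀ d, ρ (d + 1) + ρ d + ρ (d - 1) = dl d)
    (i j k : ZMod N) :
    dl (i - k - 2) * ((ρ (i - j + 1) - ρ (i - j - 1)) - (ρ (j - k) - ρ (j - k - 1)))
      = dl (i - k - 2) * (dl (j - i) - dl (j - k - 1)) := by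
  refine dl_mul _ _ _ fun h => ?_
  obtain rfl : i = k + 2 := by linear_combination h
  have h := rec3 ρ hrec (j - k - 2)
  rw [← hev (k + 2 - j + 1), ← hev (k + 2 - j - 1)]
  ring_nf at h ⊢
  linarith

lemma aab3 (i j k : ZMod N) :
    dl (i - j - 1) * ((ρ (j - k + 1) - ρ (j - k - 1)) - (ρ (j - k) - ρ (j - k - 1))
      - (ρ (i - k) - ρ (i - k - 1))) = 0 := by
  rw [← mul_zero (dl (i - j - 1))]
  refine dl_mul _ _ _ fun h => ?_
  obtain rfl : i = j + 1 := by linear_combination h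
  ring_nf

lemma abb1 (hev : ∀ d, ρ (-d) = ρ d)
    (hrec : ∀ d, ρ (d + 1) + ρ d + ρ (d - 1) = dl d)
    (i j k : ZMod N) :
    dl (k - i - 1) * ((ρ (i - j) - ρ (i - j - 1)) - (ρ (j - k + 1) - ρ (j - k - 1)))
      = dl (k - i - 1) * (dl (j - k) - dl (i - j)) := by
  refine dl_mul _ _ _ fun h => ?_
  obtain rfl : k = i + 1 := by linear_combination h
  have h := rec3 ρ hrec (i - j)
  rw [← hev (j - _ + 1), ← hev (j - _ - 1), ← dl_even (j - _)]
  ring_nf at h ⊢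
  linarith

lemma abb2 (hev : ∀ d, ρ (-d) = ρ d)
    (hrec : ∀ d, ρ (d + 1) + ρ d + ρ (d - 1) = dl d)
    (i j k : ZMod N) :
    dl (i - k - 2) * ((ρ (i - j) - ρ (i - j - 1)) - (ρ (j - k + 1) - ρ (j - k - 1)))
      = dl (i - k - 2) * (dl (j - k - 1) - dl (j - k)) := by
  refine dl_mul _ _ _ fun h => ?_
  obtain rfl : i = k + 2 := by linear_combination h
  have h := rec3 ρ hrec (j - k - 1)
  rw [← hev (k + 2 - j), ← hev (k + 2 - j - 1)]
  ring_nf at h ⊢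
  linarith

lemma abb3 (hev : ∀ d, ρ (-d) = ρ d)
    (i j k : ZMod N) :
    dl (k - j - 1) * ((ρ (k - i + 1) - ρ (k - i - 1)) + (ρ (i - j) - ρ (i - j - 1))
      + (ρ (i - k) - ρ (i - k - 1))) = 0 := by
  rw [← mul_zero (dl (k - j - 1))]
  refine dl_mul _ _ _ fun h => ?_
  obtain rfl : k = j + 1 := by linear_combination h
  rw [← hev (j + 1 - i + 1), ← hev (j + 1 - i - 1)]
  ring_nf

lemma bbb1 (hrec : ∀ d, ρ (d + 1) + ρ d + ρ (d - 1) = dl d)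
    (i j k : ZMod N) :
    dl (j - i - 1) * ((ρ (j - k) - ρ (j - k - 1)) - (ρ (j - k + 1) - ρ (j - k - 1))
      - (ρ (i - k + 1) - ρ (i - k - 1))) = dl (j - i - 1) * (dl (i - k) - dl (j - k)) := by
  refine dl_mul _ _ _ fun h => ?_
  obtain rfl : j = i + 1 := by linear_combination h
  have h := rec3 ρ hrec (i - k)
  ring_nf at h ⊢
  linarith

lemma R1 (a b : ZMod N → ℝ) (x y z : ZMod N) :
    dl (x - y - 1) * dl (z - y) * b y * a z = dl (x - z - 1) * dl (y - z) * b z * a y := by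
  by_cases h : z = y
  · subst h; rfl
  · simp [dl, sub_eq_zero, h, Ne.symm h]

lemma R2 (a b : ZMod N → ℝ) (x y z : ZMod N) :
    dl (x - y - 1) * dl (z - x) * b y * a z = dl (z - y - 1) * dl (x - z) * b y * a x := by
  by_cases h : z = x
  · subst h; rfl
  · simp [dl, sub_eq_zero, h, Ne.symm h]

lemma R4 (a : ZMod N → ℝ) (x y z : ZMod N) :
    dl (z - x - 1) * dl (y - x) * a y = dl (z - y - 1) * dl (x - y) * a x := by
  by_cases h : y = x
  · subst h; rfl
  · simp [dl, sub_eq_zero, h, Ne.symm h]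

lemma R5 (a : ZMod N → ℝ) (x y z : ZMod N) :
    dl (x - z - 2) * dl (y - x) * a y = dl (y - z - 2) * dl (x - y) * a x := by
  by_cases h : y = x
  · subst h; rfl
  · simp [dl, sub_eq_zero, h, Ne.symm h]

lemma R7 (b : ZMod N → ℝ) (x y z : ZMod N) :
    dl (z - x - 1) * dl (y - z) * b y = dl (y - x - 1) * dl (z - y) * b z := by
  by_cases h : y = z
  · subst h; rfl
  · simp [dl, sub_eq_zero, h, Ne.symm h]

lemma R8 (b : ZMod N → ℝ) (x y z : ZMod N) :
    dl (x - z - 2) * dl (y - z) * b y = dl (x - y - 2) * dl (z - y) * b z := by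
  by_cases h : y = z
  · subst h; rfl
  · simp [dl, sub_eq_zero, h, Ne.symm h]

lemma R9 (a b : ZMod N → ℝ) (x y z : ZMod N) :
    dl (y - x - 1) * dl (x - z) * a y * b z = dl (y - z - 1) * dl (z - x) * a y * b x := by
  by_cases h : x = z
  · subst h; rfl
  · simp [dl, sub_eq_zero, h, Ne.symm h]

lemma R10 (a b : ZMod N → ℝ) (x y z : ZMod N) :
    dl (y - x - 1) * dl (y - z) * a y * b z = dl (z - x - 1) * dl (z - y) * a z * b y := by
  by_cases h : y = z
  · subst h; rfl
  · simp [dl, sub_eq_zero, h, Ne.symm h]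

lemma R3 (a : ZMod N → ℝ) (i j k : ZMod N) :
    dl (i - j - 1) * dl (k - j - 1) * a k = dl (k - j - 1) * dl (i - k) * a i := by
  have h : dl (k - j - 1) * (dl (i - j - 1) * a k) = dl (k - j - 1) * (dl (i - k) * a i) := by
    refine dl_mul _ _ _ fun h => ?_
    obtain rfl : k = j + 1 := by linear_combination h
    rw [← sub_sub]
    refine dl_mul _ _ _ fun h => ?_
    congr 1
    linear_combination -h
  linear_combination h

lemma R6 (b : ZMod N → ℝ) (i j k : ZMod N) :
    dl (k - j - 1) * dl (k - i - 1) * b i = dl (k - i - 1) * dl (i - j) * b j := by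
  have h : dl (k - i - 1) * (dl (k - j - 1) * b i) = dl (k - i - 1) * (dl (i - j) * b j) := by
    refine dl_mul _ _ _ fun h => ?_
    obtain rfl : k = i + 1 := by linear_combination h
    rw [show i + 1 - j - 1 = i - j by ring]
    refine dl_mul _ _ _ fun h => ?_
    congr 1
    linear_combination h
  linear_combination h

/-- The cyclic sum in the Jacobi identity. -/
noncomputable def JJ (lam μ ν : ℝ) (ρ : ZMod N → ℝ) (a b : ZMod N → ℝ)
    (α β γ : ZMod N ⊕ ZMod N) : ℝ :=
  DBr lam μ ν ρ a b (fun s => Br lam μ ν ρ a b (Sum.inl s) α)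
      (fun s => Br lam μ ν ρ a b (Sum.inr s) α) β γ
    + DBr lam μ ν ρ a b (fun s => Br lam μ ν ρ a b (Sum.inl s) β)
      (fun s => Br lam μ ν ρ a b (Sum.inr s) β) γ α
    + DBr lam μ ν ρ a b (fun s => Br lam μ ν ρ a b (Sum.inl s) γ)
      (fun s => Br lam μ ν ρ a b (Sum.inr s) γ) α β

lemma jac_aaa (hev : ∀ d, ρ (-d) = ρ d)
    (hrec : ∀ d, ρ (d + 1) + ρ d + ρ (d - 1) = dl d)
    (lam μ ν : ℝ) (a b : ZMod N → ℝ) (i j k : ZMod N) :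
    JJ lam μ ν ρ a b (Sum.inl i) (Sum.inl j) (Sum.inl k) = 0 := by
  have hij := K_odd ρ hev i j
  have hjk := K_odd ρ hev j k
  have hki := K_odd ρ hev k i
  simp only [JJ, Br, DBr]
  have t0 := aaa1 ρ hrec i j k
  have t1 := aaa1 ρ hrec j i k
  have t2 := ee_ef i j k
  have t3 := ee_ef k j i
  have t4 := R1 a b i j k
  have t5 := R2 a b i j k
  have t6 := aaa1 ρ hrec j k i
  have t7 := aaa1 ρ hrec k j i
  have t8 := ee_ef j k i
  have t9 := ee_ef i k j
  have t10 := R1 a b j k i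
  have t11 := R2 a b j k i
  have t12 := aaa1 ρ hrec k i j
  have t13 := aaa1 ρ hrec i k j
  have t14 := ee_ef k i j
  have t15 := ee_ef j i k
  have t16 := R1 a b k i j
  have t17 := R2 a b k i j
  simp only [hij, hjk, hki] at t0 t1 t6 t7 t12 t13 ⊢
  linear_combination (ν ^ 2 * lam * b j * a k) * t0
    + (-(ν ^ 2 * lam * b i * a k)) * t1
    + (-(μ * ν)) * t2
    + (μ * ν) * t3
    + (ν ^ 2 * lam) * t4
    + (-(ν ^ 2 * lam)) * t5
    + (ν ^ 2 * lam * b k * a i) * t6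
    + (-(ν ^ 2 * lam * b j * a i)) * t7
    + (-(μ * ν)) * t8
    + (μ * ν) * t9
    + (ν ^ 2 * lam) * t10
    + (-(ν ^ 2 * lam)) * t11
    + (ν ^ 2 * lam * b i * a j) * t12
    + (-(ν ^ 2 * lam * b k * a j)) * t13
    + (-(μ * ν)) * t14
    + (μ * ν) * t15
    + (ν ^ 2 * lam) * t16
    + (-(ν ^ 2 * lam)) * t17

lemma jac_aab (hev : ∀ d, ρ (-d) = ρ d)
    (hrec : ∀ d, ρ (d + 1) + ρ d + ρ (d - 1) = dl d)
    (lam μ ν : ℝ) (a b : ZMod N → ℝ) (i j k : ZMod N) :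
    JJ lam μ ν ρ a b (Sum.inl i) (Sum.inl j) (Sum.inr k) = 0 := by
  have hij := K_odd ρ hev i j
  have hjk := K_odd ρ hev j k
  have hki := K_odd ρ hev k i
  simp only [JJ, Br, DBr]
  have t0 := aab1 ρ hev hrec i j k
  have t1 := aab2 ρ hev hrec i j k
  have t2 := aab3 ρ i j k
  have t3 := ee_ef i j k
  have t4 := R3 a i j k
  have t5 := aab1 ρ hev hrec j i k
  have t6 := aab2 ρ hev hrec j i k
  have t7 := aab3 ρ j i k
  have t8 := ee_ef j i k
  have t9 := R3 a j i k
  have t10 := R4 a i j k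
  have t11 := R5 a i j k
  simp only [hij, hjk, hki] at t0 t1 t2 t5 t6 t7 ⊢
  linear_combination ((μ * ν * lam * a j)) * t0
    + (-(μ * ν * lam * a j)) * t1
    + ((ν ^ 2 * lam * b j * b k)) * t2
    + (-(μ * ν * lam * a j)) * t3
    + ((μ * ν * lam)) * t4
    + (-(μ * ν * lam * a i)) * t5
    + ((μ * ν * lam * a i)) * t6
    + (-(ν ^ 2 * lam * b i * b k)) * t7
    + ((μ * ν * lam * a i)) * t8
    + (-(μ * ν * lam)) * t9
    + (-(μ * ν * lam)) * t10
    + (-(μ * ν * lam)) * t11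

lemma jac_abb (hev : ∀ d, ρ (-d) = ρ d)
    (hrec : ∀ d, ρ (d + 1) + ρ d + ρ (d - 1) = dl d)
    (lam μ ν : ℝ) (a b : ZMod N → ℝ) (i j k : ZMod N) :
    JJ lam μ ν ρ a b (Sum.inl i) (Sum.inr j) (Sum.inr k) = 0 := by
  have hij := K_odd ρ hev i j
  have hjk := K_odd ρ hev j k
  have hki := K_odd ρ hev k i
  simp only [JJ, Br, DBr]
  have t0 := abb1 ρ hev hrec i j k
  have t1 := abb2 ρ hev hrec i j k
  have t2 := abb3 ρ hev i j k
  have t3 := ee_ef i j k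
  have t4 := R6 b i j k
  have t5 := abb1 ρ hev hrec i k j
  have t6 := abb2 ρ hev hrec i k j
  have t7 := abb3 ρ hev i k j
  have t8 := ee_ef i k j
  have t9 := R6 b i k j
  have t10 := R7 b i j k
  have t11 := R8 b i j k
  simp only [hij, hjk, hki] at t0 t1 t2 t5 t6 t7 ⊢
  linear_combination ((μ * ν * lam * b j)) * t0
    + (-(μ * ν * lam * b j)) * t1
    + ((μ * ν * lam * lam * a k * a i)) * t2
    + ((μ * ν * lam * b j)) * t3
    + ((μ * ν * lam)) * t4
    + (-(μ * ν * lam * b k)) * t5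
    + ((μ * ν * lam * b k)) * t6
    + (-(μ * ν * lam * lam * a j * a i)) * t7
    + (-(μ * ν * lam * b k)) * t8
    + (-(μ * ν * lam)) * t9
    + (μ * ν * lam) * t10
    + (μ * ν * lam) * t11

lemma jac_bbb (hev : ∀ d, ρ (-d) = ρ d)
    (hrec : ∀ d, ρ (d + 1) + ρ d + ρ (d - 1) = dl d)
    (lam μ ν : ℝ) (a b : ZMod N → ℝ) (i j k : ZMod N) :
    JJ lam μ ν ρ a b (Sum.inr i) (Sum.inr j) (Sum.inr k) = 0 := by
  have hij := K_odd ρ hev i j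
  have hjk := K_odd ρ hev j k
  have hki := K_odd ρ hev k i
  simp only [JJ, Br, DBr]
  have t0 := bbb1 ρ hrec i j k
  have t1 := bbb1 ρ hrec j i k
  have t2 := ff_ee j i k
  have t3 := ff_ee i j k
  have t4 := R9 a b i j k
  have t5 := R10 a b i j k
  have t6 := bbb1 ρ hrec j k i
  have t7 := bbb1 ρ hrec k j i
  have t8 := ff_ee k j i
  have t9 := ff_ee j k i
  have t10 := R9 a b j k i
  have t11 := R10 a b j k i
  have t12 := bbb1 ρ hrec k i j
  have t13 := bbb1 ρ hrec i k j
  have t14 := ff_ee i k j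
  have t15 := ff_ee k i j
  have t16 := R9 a b k i j
  have t17 := R10 a b k i j
  simp only [hij, hjk, hki] at t0 t1 t6 t7 t12 t13 ⊢
  linear_combination (μ * ν * lam * lam * a j * b k) * t0
    + (-(μ * ν * lam * lam * a i * b k)) * t1
    + (-(μ ^ 2 * lam)) * t2
    + (μ ^ 2 * lam) * t3
    + (μ * ν * lam * lam) * t4
    + (-(μ * ν * lam * lam)) * t5
    + (μ * ν * lam * lam * a k * b i) * t6
    + (-(μ * ν * lam * lam * a j * b i)) * t7
    + (-(μ ^ 2 * lam)) * t8
    + (μ ^ 2 * lam) * t9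
    + (μ * ν * lam * lam) * t10
    + (-(μ * ν * lam * lam)) * t11
    + (μ * ν * lam * lam * a i * b j) * t12
    + (-(μ * ν * lam * lam * a k * b j)) * t13
    + (-(μ ^ 2 * lam)) * t14
    + (μ ^ 2 * lam) * t15
    + (μ * ν * lam * lam) * t16
    + (-(μ * ν * lam * lam)) * t17

end

lemma jac {N : ℕ} (ρ : ZMod N → ℝ) (hev : ∀ d, ρ (-d) = ρ d)
    (hrec : ∀ d, ρ (d + 1) + ρ d + ρ (d - 1) = dl d)
    (lam μ ν : ℝ) (a b : ZMod N → ℝ) (α β γ : ZMod N ⊕ ZMod N) :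
    JJ lam μ ν ρ a b α β γ = 0 := by
  have cyc : ∀ α β γ, JJ lam μ ν ρ a b α β γ = JJ lam μ ν ρ a b β γ α := by
    intro α β γ
    simp only [JJ]
    ring
  rcases α with i | i <;> rcases β with j | j <;> rcases γ with k | k
  · exact jac_aaa ρ hev hrec lam μ ν a b i j k
  · exact jac_aab ρ hev hrec lam μ ν a b i j k
  · rw [← cyc]; exact jac_aab ρ hev hrec lam μ ν a b k i j
  · exact jac_abb ρ hev hrec lam μ ν a b i j k
  · rw [cyc]; exact jac_aab ρ hev hrec lam μ ν a b j k i
  · rw [cyc]; exact jac_abb ρ hev hrec lam μ ν a b j k i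
  · rw [← cyc]; exact jac_abb ρ hev hrec lam μ ν a b k i j
  · exact jac_bbb ρ hev hrec lam μ ν a b i j k

lemma R_unique {N : ℕ} (R : (ZMod N → ℝ) → (ZMod N → ℝ))
    (hR2 : ∀ (x : ZMod N → ℝ) (s : ZMod N),
      R (fun r => x (r + 1) + x r + x (r - 1)) s = x s)
    (x y : ZMod N → ℝ) (h : ∀ s, y (s + 1) + y s + y (s - 1) = x s) (s : ZMod N) :
    R x s = y s := by
  rw [← hR2 y s]
  congr 1
  funext r
  exact (h r).symm

lemma Br_anti {N : ℕ} (ρ : ZMod N → ℝ) (hev : ∀ d, ρ (-d) = ρ d)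
    (lam μ ν : ℝ) (a b : ZMod N → ℝ) (α β : ZMod N ⊕ ZMod N) :
    Br lam μ ν ρ a b α β = - Br lam μ ν ρ a b β α := by
  rcases α with i | i <;> rcases β with j | j
  · have h := K_odd ρ hev i j
    simp only [Br, h]; ring
  · simp only [Br]; ring
  · simp only [Br]
  · have h := K_odd ρ hev i j
    simp only [Br, h]; ring

lemma single_eq {N : ℕ} (r s : ZMod N) : (Pi.single r 1 : ZMod N → ℝ) s = dl (s - r) := by
  simp [dl, Pi.single_apply, sub_eq_zero]

lemma Wmat_eq {N : ℕ} (lam μ ν : ℝ) (R : (ZMod N → ℝ) → (ZMod N → ℝ)) (ρ : ZMod N → ℝ)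
    (hev : ∀ d, ρ (-d) = ρ d)
    (hR : ∀ (x : ZMod N → ℝ) (r s : ZMod N), R (fun t => x t * dl (t - r)) s = x r * ρ (s - r))
    (a b : ZMod N → ℝ) (α β : ZMod N ⊕ ZMod N) :
    Wmat lam μ ν R a b α β = Br lam μ ν ρ a b α β := by
  have hz : ∀ (x : ZMod N → ℝ) (s : ZMod N), R (fun t => x t * (0 : ℝ)) s = 0 := by
    intro x s
    have h := hR 0 s s
    simpa using h
  have hv : ∀ (x : ZMod N → ℝ) (u v w : ZMod N), u - v = w → x u * dl w = x v * dl w := by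
    intro x u v w h
    rw [mul_comm, mul_comm (x v)]
    refine dl_mul _ _ _ fun h' => ?_
    rw [sub_eq_zero.mp (h.trans h')]
  have hd : ∀ u v : ZMod N, u = -v → dl u = dl v := by
    rintro u v rfl
    exact dl_even v
  rcases α with s | s <;> rcases β with r | r
  · simp only [Wmat, basisPair, P1, P2, Br, single_eq, hR, hz, Pi.zero_apply]
    have h1 := hv b (s - 1) r (s - r - 1) (by ring)
    rw [show s - 1 - r = s - r - 1 by ring, show s + 1 - r = s - r + 1 by ring,
      hd (s - r + 1) (r - s - 1) (by ring)]
    linear_combination ν * h1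
  · simp only [Wmat, basisPair, P1, P2, Br, single_eq, hR, hz, Pi.zero_apply]
    rw [show s - 1 - r = s - r - 1 by ring,
      hd (s + 1 - r) (r - s - 1) (by ring), show s - 2 - r = s - r - 2 by ring]
    ring
  · simp only [Wmat, basisPair, P1, P2, Br, single_eq, hR, hz, Pi.zero_apply]
    rw [hd (s + 2 - r) (r - s - 2) (by ring), show s - 1 - r = s - r - 1 by ring,
      ← hev (s - r), ← hev (s + 1 - r), show -(s - r) = r - s by ring,
      show -(s + 1 - r) = r - s - 1 by ring]
    ring
  · simp only [Wmat, basisPair, P1, P2, Br, single_eq, hR, hz, Pi.zero_apply]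
    have h1 := hv a (s + 1) r (s - r + 1) (by ring)
    rw [hd (s - r + 1) (r - s - 1) (by ring)] at h1
    rw [show s - 1 - r = s - r - 1 by ring, show s + 1 - r = s - r + 1 by ring,
      hd (s - r + 1) (r - s - 1) (by ring)]
    linear_combination μ * lam * h1

lemma fderiv_Br {N : ℕ} [NeZero N] (lam μ ν : ℝ) (ρ a b : ZMod N → ℝ) (β γ : ZMod N ⊕ ZMod N)
    (v : (ZMod N → ℝ) × (ZMod N → ℝ)) :
    fderiv ℝ (fun w : (ZMod N → ℝ) × (ZMod N → ℝ) => Br lam μ ν ρ w.1 w.2 β γ) (a, b) v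
      = DBr lam μ ν ρ a b v.1 v.2 β γ := by
  have hd : DifferentiableAt ℝ
      (fun w : (ZMod N → ℝ) × (ZMod N → ℝ) => Br lam μ ν ρ w.1 w.2 β γ) (a, b) := by
    rcases β with i | i <;> rcases γ with j | j <;> simp only [Br] <;> fun_prop
  rw [← hd.lineDeriv_eq_fderiv]
  refine HasLineDerivAt.lineDeriv ?_
  unfold HasLineDerivAt
  have hx : ∀ (x y : ZMod N → ℝ) (r : ZMod N),
      HasDerivAt (fun t : ℝ => x r + t * y r) (y r) 0 := by
    intro x y r
    simpa using ((hasDerivAt_id (0 : ℝ)).mul_const (y r)).const_add (x r)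
  have ha := hx a v.1
  have hb := hx b v.2
  rcases β with i | i <;> rcases γ with j | j <;>
    simp only [Br, DBr, Prod.fst_add, Prod.snd_add, Prod.smul_fst, Prod.smul_snd,
      Pi.add_apply, Pi.smul_apply, smul_eq_mul]
  · refine HasDerivAt.congr_deriv (((((hb j).mul_const _).sub ((hb i).mul_const _)).add
      ((((ha i).const_mul lam).mul (ha j)).mul_const _)).const_mul ν) ?_
    simp only [zero_mul, add_zero]
    ring
  · refine HasDerivAt.congr_deriv
      (((((ha i).const_mul (ν * lam)).mul (hb j)).mul_const _).const_add _) ?_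
    simp only [zero_mul, add_zero]
    ring
  · refine HasDerivAt.congr_deriv
      (((((ha j).const_mul (ν * lam)).mul (hb i)).mul_const _).const_add _).neg ?_
    simp only [zero_mul, add_zero]
    ring
  · refine HasDerivAt.congr_deriv (((((ha j).mul_const _).sub ((ha i).mul_const _)).const_mul
      (μ * lam)).add ((((hb i).const_mul (ν * lam)).mul (hb j)).mul_const _)) ?_
    simp only [zero_mul, add_zero]
    ring

lemma sum_basis {N : ℕ} [NeZero N] (c : ZMod N ⊕ ZMod N → ℝ) :
    ∑ δ, c δ • basisPair δ = (fun s => c (Sum.inl s), fun s => c (Sum.inr s)) := by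
  rw [Fintype.sum_sum_type]
  ext s
  · simp [basisPair, Prod.fst_sum, Finset.sum_apply, Pi.single_apply]
  · simp [basisPair, Prod.snd_sum, Finset.sum_apply, Pi.single_apply]

lemma sum_fderiv {N : ℕ} [NeZero N] (c : ZMod N ⊕ ZMod N → ℝ)
    (L : (ZMod N → ℝ) × (ZMod N → ℝ) →L[ℝ] ℝ) :
    ∑ δ, c δ * L (basisPair δ) = L (fun s => c (Sum.inl s), fun s => c (Sum.inr s)) := by
  rw [← sum_basis, map_sum]
  simp

end HP

/-- `𝒫₁` and `𝒫₂` form a Hamiltonian pair: for all `μ, ν` the matrix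
of `μ𝒫₁ + ν𝒫₂` is antisymmetric and satisfies the coordinate Jacobi identity,
where `∂/∂x_δ` is the directional derivative at `(a,b)` in the coordinate
direction `δ`. -/
theorem stmt_15 {N : ℕ} [NeZero N] (hN3 : ¬ (3 ∣ N)) (lam : ℝ)
    (R : (ZMod N → ℝ) → (ZMod N → ℝ))
    (hR1 : ∀ (x : ZMod N → ℝ) (s : ZMod N),
      R x (s + 1) + R x s + R x (s - 1) = x s)
    (hR2 : ∀ (x : ZMod N → ℝ) (s : ZMod N),
      R (fun r => x (r + 1) + x r + x (r - 1)) s = x s)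
    (μ ν : ℝ) (a b : ZMod N → ℝ) :
    (∀ α β : ZMod N ⊕ ZMod N,
      Wmat lam μ ν R a b α β = - Wmat lam μ ν R a b β α) ∧
    (∀ α β γ : ZMod N ⊕ ZMod N,
      ∑ δ : ZMod N ⊕ ZMod N,
        (Wmat lam μ ν R a b δ α *
            fderiv ℝ (fun w : (ZMod N → ℝ) × (ZMod N → ℝ) =>
              Wmat lam μ ν R w.1 w.2 β γ) (a, b) (basisPair δ)
         + Wmat lam μ ν R a b δ β *
            fderiv ℝ (fun w : (ZMod N → ℝ) × (ZMod N → ℝ) =>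
              Wmat lam μ ν R w.1 w.2 γ α) (a, b) (basisPair δ)
         + Wmat lam μ ν R a b δ γ *
            fderiv ℝ (fun w : (ZMod N → ℝ) × (ZMod N → ℝ) =>
              Wmat lam μ ν R w.1 w.2 α β) (a, b) (basisPair δ)) = 0) := by
  classical
  obtain ⟨ρ, hρ⟩ : ∃ ρ : ZMod N → ℝ, ρ = R HP.dl := ⟨_, rfl⟩
  have hrec : ∀ d, ρ (d + 1) + ρ d + ρ (d - 1) = HP.dl d := by
    intro d
    rw [hρ]
    exact hR1 _ d
  have hev : ∀ d, ρ (-d) = ρ d := by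
    intro d
    conv_rhs => rw [hρ]
    refine (HP.R_unique R hR2 HP.dl (fun d => ρ (-d)) (fun s => ?_) d).symm
    have h := hrec (-s)
    rw [HP.dl_even] at h
    rw [← h, show -(s + 1) = -s - 1 by ring, show -(s - 1) = -s + 1 by ring]
    ring
  have hR : ∀ (x : ZMod N → ℝ) (r s : ZMod N),
      R (fun t => x t * HP.dl (t - r)) s = x r * ρ (s - r) := by
    intro x r s
    refine HP.R_unique R hR2 _ (fun s => x r * ρ (s - r)) (fun s => ?_) s
    have h := hrec (s - r)
    have h2 : HP.dl (s - r) * x s = HP.dl (s - r) * x r :=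
      HP.dl_mul _ _ _ fun h => by rw [sub_eq_zero.mp h]
    rw [show s + 1 - r = s - r + 1 by ring, show s - 1 - r = s - r - 1 by ring]
    linear_combination x r * h - h2
  have hW := HP.Wmat_eq lam μ ν R ρ hev hR
  simp only [hW]
  refine ⟨HP.Br_anti ρ hev lam μ ν a b, fun α β γ => ?_⟩
  rw [Finset.sum_add_distrib, Finset.sum_add_distrib, HP.sum_fderiv, HP.sum_fderiv,
    HP.sum_fderiv, HP.fderiv_Br, HP.fderiv_Br, HP.fderiv_Br]
  exact HP.jac ρ hev hrec lam μ ν a b α β γ
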